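/- There exist sequences of carefully synchronizing PFAs with only one undefined transition and exponential shortest carefully synchronizing word length: (i) there exist a constant c > 0 and an integer N such that for every n ≥ N there is a carefully synchronizing PFA with n states, an alphabet of 3 symbols, and exactly one undefined transition, whose shortest carefully synchronizing word has length at least c·3^{n/7}; (ii) there exist a constant c' > 0 and an integer N' such that for every n ≥ N' there is a carefully synchronizing PFA with n states, an alphabet of 2 symbols, and exactly one undefined transition, whose shortest carefully synchronizing word has length at least c'·2^{n/5}. -/

import Mathlib

/-- One step of a PFA on an `Option` state. -/
def pfaStep {Q σ : Type*} (δ : Q → σ → Option Q) (o : Option Q) (a : σ) : Option Q :=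
  o.bind fun q => δ q a

/-- The (partial) state reached from `q` after reading word `w` in the PFA `δ`. -/
def pfaRun {Q σ : Type*} (δ : Q → σ → Option Q) (q : Q) (w : List σ) : Option Q :=
  w.foldl (pfaStep δ) (some q)

/-- A word `w` is carefully synchronizing for the PFA `δ`. -/
def IsCareSyncWord {Q σ : Type*} (δ : Q → σ → Option Q) (w : List σ) : Prop :=
  ∃ qs : Q, ∀ q : Q, pfaRun δ q w = some qs

/-- A PFA is transitive if every state can be reached from every state by some word. -/
def PFATransitive {Q σ : Type*} (δ : Q → σ → Option Q) : Prop :=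
  ∀ q q' : Q, ∃ w : List σ, pfaRun δ q w = some q'

/-!
The states represent a counter in base `b`, whose digits lie on a rotating ring of `k + 1` places
together with a marker. A letter can raise the value of a counter present among the active states
by at most `1`: the only carry that is enabled without an overflowed digit is the one behind the
marker, which goes to the least significant digit. The marker can be merged with another state only
once the most significant digit has overflowed, so a carefully synchronizing word has length at
least `b ^ k`. Conversely, counting to the end merges the marker with a neighbouring place, and
repeating this on ever fewer places synchronizes everything.

All obstructions come from the `b` digits that block a carry. The carry is performed in a second
copy of the ring, in which these digits are identified, and this leaves a single undefined
transition. The two copies have to be distinguished only where the letters act differently in them: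
with three letters this is the case at two places, so that `(b + 1) k + O(1)` states suffice, and
with two letters at all places, which takes `2 (b + 1) k + O(1)` states. Taking `b = 3` and `b = 4`
gives the growth rates `3 ^ (n / 4)` and `4 ^ (n / 10) = 2 ^ (n / 5)`.
-/

section PFA

variable {Q Λ : Type*} {δ : Q → Λ → Option Q}

lemma pfaRun_nil (q : Q) : pfaRun δ q [] = some q := rfl

lemma pfaRun_concat (q : Q) (w : List Λ) (l : Λ) :
    pfaRun δ q (w ++ [l]) = (pfaRun δ q w).bind (δ · l) := by
  simp [pfaRun, pfaStep]

lemma pfaRun_append (q : Q) (v w : List Λ) :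
    pfaRun δ q (v ++ w) = (pfaRun δ q v).bind (pfaRun δ · w) := by
  induction w using List.reverseRecOn with
  | nil => simp [pfaRun]
  | append_singleton w l ih =>
    simp only [← List.append_assoc, pfaRun_concat, ih, Option.bind_assoc]

lemma pfaRun_cons (q : Q) (l : Λ) (w : List Λ) :
    pfaRun δ q (l :: w) = (δ q l).bind (pfaRun δ · w) :=
  pfaRun_append q [l] w

/-- The PFA `δ` has exactly one undefined transition and is carefully synchronizing, and its
shortest carefully synchronizing word has length at least `r`. -/
def IsSlowPFA (δ : Q → Λ → Option Q) (r : ℝ) : Prop :=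
  (∃! p : Q × Λ, δ p.1 p.2 = none) ∧ (∃ w, IsCareSyncWord δ w) ∧
    ∀ w, IsCareSyncWord δ w → r ≤ (w.length : ℝ)

/-- The PFA on `X` in which `x` imitates the state `π x` of `δ` and the results are embedded
by `ι`; it adds to `δ` a clone of `π x` for each `x` outside the range of `ι`. -/
def clonePFA {X : Type*} (δ : Q → Λ → Option Q) (π : X → Q) (ι : Q → X) : X → Λ → Option X :=
  fun x l => (δ (π x) l).map ι

variable {X : Type*} {π : X → Q} {ι : Q → X}

lemma map_pfaRun_clonePFA (hπ : Function.LeftInverse π ι) (x : X) (w : List Λ) :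
    (pfaRun (clonePFA δ π ι) x w).map π = pfaRun δ (π x) w := by
  induction w using List.reverseRecOn with
  | nil => rfl
  | append_singleton w l ih =>
    rw [pfaRun_concat, pfaRun_concat, ← ih]
    cases pfaRun (clonePFA δ π ι) x w <;> simp [clonePFA, Function.comp_def, hπ _]

lemma isCareSyncWord_of_clonePFA (hπ : Function.LeftInverse π ι) {w : List Λ}
    (hw : IsCareSyncWord (clonePFA δ π ι) w) : IsCareSyncWord δ w := by
  obtain ⟨x, hx⟩ := hw
  refine ⟨π x, fun q => ?_⟩
  rw [← hπ q, ← map_pfaRun_clonePFA hπ, hx, Option.map_some]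

lemma isCareSyncWord_clonePFA (hπ : Function.LeftInverse π ι) {w : List Λ} (hne : w ≠ [])
    (hw : IsCareSyncWord δ w) : IsCareSyncWord (clonePFA δ π ι) w := by
  obtain ⟨q, hq⟩ := hw
  refine ⟨ι q, fun x => ?_⟩
  have run : pfaRun (clonePFA δ π ι) x w = (pfaRun δ (π x) w).map ι := by
    rw [← List.dropLast_append_getLast hne, pfaRun_concat, pfaRun_concat,
      ← map_pfaRun_clonePFA hπ]
    cases pfaRun (clonePFA δ π ι) x w.dropLast <;> simp [clonePFA]
  rw [run, hq, Option.map_some]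

/-- Cloning a state on which all letters are defined neither adds undefined transitions nor
shortens carefully synchronizing words. -/
theorem IsSlowPFA.exists_fin [Finite Q] {r : ℝ} (h : IsSlowPFA δ r) (hr : 0 < r) {q₀ : Q}
    (hq₀ : ∀ l, δ q₀ l ≠ none) {n : ℕ} (hn : Nat.card Q ≤ n) :
    ∃ δ' : Fin n → Λ → Option (Fin n), IsSlowPFA δ' r := by
  obtain ⟨⟨⟨q, l⟩, hql, huniq⟩, ⟨w, hw⟩, hlen⟩ := h
  let ι : Q ↪ Fin n := (Finite.equivFin Q).toEmbedding.trans (Fin.castLEEmb hn)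
  let π : Fin n → Q := Function.extend ι id fun _ => q₀
  have hπ : Function.LeftInverse π ι := ι.injective.extend_apply _ _
  refine ⟨clonePFA δ π ι, ⟨(ι q, l), ?_, ?_⟩, ⟨w, isCareSyncWord_clonePFA hπ ?_ hw⟩,
    fun v hv => hlen v (isCareSyncWord_of_clonePFA hπ hv)⟩
  · simpa [clonePFA, hπ q] using hql
  · rintro ⟨x, l'⟩ hx
    have hxl : δ (π x) l' = none := by simpa [clonePFA] using hx
    obtain ⟨hxq, rfl⟩ := Prod.ext_iff.1 (huniq (π x, l') hxl)
    by_cases hmem : ∃ q', ι q' = x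
    · obtain ⟨q', rfl⟩ := hmem
      rw [hπ] at hxq
      exact congrArg (ι ·, _) hxq
    · have hπx : π x = q₀ := Function.extend_apply' _ _ x hmem
      exact absurd (hπx ▸ hxl) (hq₀ _)
  · rintro rfl
    exact hr.not_ge (by simpa using hlen [] hw)

/-- For large `n` there are slow PFAs with `n` states and `m` letters whose shortest carefully
synchronizing words have length `Ω(f n)`. -/
def HasSyncGrowth (m : ℕ) (f : ℕ → ℝ) : Prop :=
  ∃ c : ℝ, 0 < c ∧ ∃ N : ℕ, ∀ n : ℕ, N ≤ n →
    ∃ δ : Fin n → Fin m → Option (Fin n), IsSlowPFA δ (c * f n)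

lemma HasSyncGrowth.mono {m : ℕ} {f g : ℕ → ℝ} (h : HasSyncGrowth m g) (hfg : f ≤ g) :
    HasSyncGrowth m f := by
  obtain ⟨c, hc, N, hN⟩ := h
  refine ⟨c, hc, N, fun n hn => ?_⟩
  obtain ⟨δ, huniq, hsync, hlen⟩ := hN n hn
  exact ⟨δ, huniq, hsync, fun w hw =>
    (mul_le_mul_of_nonneg_left (hfg n) hc.le).trans (hlen w hw)⟩

lemma HasSyncGrowth.of_pow {m a b c : ℕ} (ha : 0 < a) (hb : 0 < b)
    (h : ∀ k n : ℕ, 0 < k → a * k + c ≤ n →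
      ∃ δ : Fin n → Fin m → Option (Fin n), IsSlowPFA δ (b ^ k)) :
    HasSyncGrowth m fun n => (b : ℝ) ^ ((n : ℝ) / a) := by
  have hb' : (1 : ℝ) ≤ b := by exact_mod_cast hb
  refine ⟨((b : ℝ) ^ (c + 1))⁻¹, by positivity, a + c, fun n hn => ?_⟩
  obtain ⟨k, hk, hkn, hnk⟩ : ∃ k, 0 < k ∧ a * k + c ≤ n ∧ n ≤ a * (k + 1) + c := by
    have hdiv := Nat.div_add_mod (n - c) a
    have hmod := Nat.mod_lt (n - c) ha
    refine ⟨(n - c) / a, Nat.div_pos (by omega) ha, by omega, ?_⟩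
    rw [mul_add]
    omega
  obtain ⟨δ, huniq, hsync, hlen⟩ := h k n hk hkn
  refine ⟨δ, huniq, hsync, fun w hw => le_trans ?_ (hlen w hw)⟩
  have hexp : (n : ℝ) / a ≤ ((c + 1 + k : ℕ) : ℝ) := by
    rw [div_le_iff₀ (by exact_mod_cast ha)]
    have : n ≤ (c + 1 + k) * a := by nlinarith
    exact_mod_cast this
  calc ((b : ℝ) ^ (c + 1))⁻¹ * (b : ℝ) ^ ((n : ℝ) / a)
      ≤ ((b : ℝ) ^ (c + 1))⁻¹ * (b : ℝ) ^ ((c + 1 + k : ℕ) : ℝ) := by gcongr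
    _ = b ^ k := by
      rw [Real.rpow_natCast, pow_add _ (c + 1) k, inv_mul_cancel_left₀ (by positivity)]

end PFA

namespace RingCounter

/-- A state of the ring counter: its position on a ring of `k + 1` places together with the
marker or a digit in base `b`, or a digit that has overflowed, which only occurs at place `1`. -/
inductive Cell (k b : ℕ)
  | marker (i : ZMod (k + 1))
  | digit (i : ZMod (k + 1)) (d : Fin b)
  | full

/-- The elementary moves of the ring counter. -/
inductive Move
  | stay
  | rotate
  | carry
  | reset

variable {k b : ℕ}

/-- The digit `d` at position `i`, for a digit that may have overflowed. -/
def num (i : ZMod (k + 1)) (d : ℕ) : Cell k b :=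
  if h : d < b then .digit i ⟨d, h⟩ else .full

/-- The position of a state on the ring. -/
def loc : Cell k b → ZMod (k + 1)
  | .marker i => i
  | .digit i _ => i
  | .full => 1

/-- The state at position `j` places behind the marker, when the marker is at position `p` and
the counter has the digits `d 1, …, d k`, least significant first; the marker itself is at `j = 0`
and the value of `d 0` is irrelevant. -/
def cell (p : ZMod (k + 1)) (d : ℕ → ℕ) (j : ℕ) : Cell k b :=
  if j = 0 then .marker p else num (p - (j : ZMod (k + 1))) (d j)

/-- The value of the counter with the digits `d 1, …, d k`. -/
def value (k b : ℕ) (d : ℕ → ℕ) : ℕ := ∑ j ∈ Finset.range k, d (j + 1) * b ^ j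

/-- The carry from digit `v` to digit `v + 1`; for `v = 0` this is an increment of the counter. -/
def carryDigit (v : ℕ) (d : ℕ → ℕ) : ℕ → ℕ :=
  Function.update (Function.update d v 0) (v + 1) (d (v + 1) + 1)

lemma natCast_inj_of_le {i j : ℕ} (hi : i ≤ k) (hj : j ≤ k) :
    (i : ZMod (k + 1)) = j ↔ i = j := by
  rw [ZMod.natCast_eq_natCast_iff', Nat.mod_eq_of_lt (by omega), Nat.mod_eq_of_lt (by omega)]

lemma natCast_eq_zero_iff_of_le {j : ℕ} (hj : j ≤ k) : (j : ZMod (k + 1)) = 0 ↔ j = 0 := by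
  simpa using natCast_inj_of_le hj (Nat.zero_le k)

lemma natCast_add_one_eq_zero : (k : ZMod (k + 1)) + 1 = 0 := by
  exact_mod_cast ZMod.natCast_self (k + 1)

lemma exists_natCast_eq (i : ZMod (k + 1)) : ∃ j ≤ k, (j : ZMod (k + 1)) = i :=
  ⟨i.val, Nat.lt_succ_iff.1 i.val_lt, ZMod.natCast_zmod_val i⟩

lemma num_of_lt {i : ZMod (k + 1)} {d : ℕ} (h : d < b) :
    (num i d : Cell k b) = .digit i ⟨d, h⟩ := dif_pos h

lemma num_of_le {i : ZMod (k + 1)} {d : ℕ} (h : b ≤ d) : (num i d : Cell k b) = .full :=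
  dif_neg h.not_gt

lemma num_ne_marker {i i' : ZMod (k + 1)} {d : ℕ} : (num i d : Cell k b) ≠ .marker i' := by
  unfold num
  split_ifs <;> simp

lemma loc_num {i : ZMod (k + 1)} {d : ℕ} (h : b ≤ d → i = 1) : loc (num i d : Cell k b) = i := by
  unfold num
  split_ifs with hd
  · rfl
  · exact (h (not_lt.1 hd)).symm

lemma cell_zero (p : ZMod (k + 1)) (d : ℕ → ℕ) : (cell p d 0 : Cell k b) = .marker p := rfl

lemma cell_of_ne_zero {p : ZMod (k + 1)} {d : ℕ → ℕ} {j : ℕ} (hj : j ≠ 0) :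
    (cell p d j : Cell k b) = num (p - (j : ZMod (k + 1))) (d j) := if_neg hj

lemma loc_cell {p : ZMod (k + 1)} {d : ℕ → ℕ} {j : ℕ}
    (h : j ≠ 0 → b ≤ d j → p - (j : ZMod (k + 1)) = 1) :
    loc (cell p d j : Cell k b) = p - j := by
  rcases eq_or_ne j 0 with rfl | hj
  · simp [cell_zero, loc]
  · rw [cell_of_ne_zero hj, loc_num (h hj)]

lemma carryDigit_succ (v : ℕ) (d : ℕ → ℕ) : carryDigit v d (v + 1) = d (v + 1) + 1 :=
  Function.update_self ..

lemma carryDigit_self (v : ℕ) (d : ℕ → ℕ) : carryDigit v d v = 0 := by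
  rw [carryDigit, Function.update_of_ne v.lt_succ_self.ne, Function.update_self]

lemma carryDigit_of_ne {v j : ℕ} (d : ℕ → ℕ) (h : j ≠ v) (h' : j ≠ v + 1) :
    carryDigit v d j = d j := by
  rw [carryDigit, Function.update_of_ne h', Function.update_of_ne h]

lemma carryDigit_lt {v j : ℕ} {d : ℕ → ℕ} (hd : j ≠ v → d j < b) (hb : 0 < b)
    (hj : j ≠ v + 1) : carryDigit v d j < b := by
  rcases eq_or_ne j v with rfl | hjv
  · rwa [carryDigit_self]
  · rw [carryDigit_of_ne d hjv hj]
    exact hd hjv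

lemma value_update (d : ℕ → ℕ) {u : ℕ} (hu : u < k) (x : ℕ) :
    value k b (Function.update d (u + 1) x) + d (u + 1) * b ^ u = value k b d + x * b ^ u := by
  have hu' := Finset.mem_range.2 hu
  have hrest : ∀ j ∈ (Finset.range k).erase u,
      Function.update d (u + 1) x (j + 1) * b ^ j = d (j + 1) * b ^ j := fun j hj => by
    rw [Function.update_of_ne (by simpa using Finset.ne_of_mem_erase hj)]
  rw [value, value, ← Finset.add_sum_erase _ _ hu', ← Finset.add_sum_erase _ _ hu',
    Finset.sum_congr rfl hrest, Function.update_self]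
  ring

lemma value_carryDigit_le {v : ℕ} {d : ℕ → ℕ} (hv : v < k) (h : v ≠ 0 → b ≤ d v) :
    value k b (carryDigit v d) ≤ value k b d + 1 := by
  have raise := value_update (b := b) (Function.update d v 0) hv (d (v + 1) + 1)
  rw [Function.update_of_ne (by omega : v + 1 ≠ v), add_one_mul] at raise
  rw [carryDigit]
  rcases v with _ | v
  · have : value k b (Function.update d 0 0) = value k b d := by simp [value]
    rw [this, pow_zero] at raise
    omega
  · have clear := value_update (b := b) d (show v < k by omega) 0
    have : b * b ^ v ≤ d (v + 1) * b ^ v := Nat.mul_le_mul_right _ (h (by omega))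
    rw [← pow_succ'] at this
    omega

lemma pow_le_value {d : ℕ → ℕ} (hk : 0 < k) (h : b ≤ d k) : b ^ k ≤ value k b d := by
  obtain ⟨m, rfl⟩ := Nat.exists_eq_succ_of_ne_zero hk.ne'
  calc b ^ (m + 1) = b * b ^ m := pow_succ' b m
    _ ≤ d (m + 1) * b ^ m := Nat.mul_le_mul_right _ h
    _ ≤ value (m + 1) b d := Finset.single_le_sum (f := fun j => d (j + 1) * b ^ j)
      (fun _ _ => Nat.zero_le _) (Finset.self_mem_range_succ m)

section Moves

variable [NeZero b]

/-- The rotation of the ring by one position; an overflowed digit is replaced by `0`. -/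
def rot : Cell k b → Cell k b
  | .marker i => .marker (i + 1)
  | .digit i d => .digit (i + 1) d
  | .full => .digit 2 0

/-- The rotation of the ring together with a carry: the digit moving from position `0` to
position `1` is incremented. This is blocked by a digit at position `1` that has not overflowed,
and it merges a marker at position `0` with the state at position `1`. -/
def fire : Cell k b → Option (Cell k b)
  | .marker i => some (if i = 0 then .digit 2 0 else .marker (i + 1))
  | .digit i d =>
    if i = 1 then none else some (if i = 0 then num 1 (d + 1) else .digit (i + 1) d)
  | .full => some (.digit 2 0)

/-- The reset of the ring: a marker at position `1`, and zero digits elsewhere. -/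
def reset (q : Cell k b) : Cell k b :=
  if loc q = 1 then .marker 1 else .digit (loc q) 0

/-- The action of a move on the states of the ring counter. -/
def Move.apply : Move → Cell k b → Option (Cell k b)
  | .stay => some
  | .rotate => some ∘ rot
  | .carry => fire
  | .reset => some ∘ RingCounter.reset

lemma num_zero (i : ZMod (k + 1)) : (num i 0 : Cell k b) = .digit i 0 :=
  num_of_lt (NeZero.pos b)

lemma loc_rot (q : Cell k b) : loc (rot q) = loc q + 1 := by
  cases q
  · rfl
  · rfl
  · exact one_add_one_eq_two.symm

lemma rot_num {i : ZMod (k + 1)} {d : ℕ} (h : d < b) :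
    rot (num i d : Cell k b) = num (i + 1) d := by
  rw [num_of_lt h, num_of_lt h, rot]

lemma rot_cell {p : ZMod (k + 1)} {d : ℕ → ℕ} {j : ℕ}
    (h : j ≠ 0 → b ≤ d j → p - (j : ZMod (k + 1)) = 1) :
    rot (cell p d j : Cell k b) = cell (p + 1) (fun j => if d j < b then d j else 0) j := by
  rcases eq_or_ne j 0 with rfl | hj
  · rfl
  rw [cell_of_ne_zero hj, cell_of_ne_zero hj, add_sub_right_comm]
  split_ifs with hd
  · exact rot_num hd
  · rw [num_of_le (not_lt.1 hd), h hj (not_lt.1 hd), num_zero, one_add_one_eq_two, rot]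

lemma fire_num_zero {d : ℕ} (hk : 0 < k) (h : d < b) :
    fire (num 0 d : Cell k b) = some (num 1 (d + 1)) := by
  have : (0 : ZMod (k + 1)) ≠ 1 := by simpa using (natCast_inj_of_le (Nat.zero_le k) hk).not
  simp [num_of_lt h, fire, this]

lemma fire_num_one {d : ℕ} (h : d < b) : fire (num 1 d : Cell k b) = none := by
  simp [num_of_lt h, fire]

lemma fire_num {i : ZMod (k + 1)} {d : ℕ} (h : d < b) (h0 : i ≠ 0) (h1 : i ≠ 1) :
    fire (num i d : Cell k b) = some (num (i + 1) d) := by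
  simp [num_of_lt h, fire, h0, h1]

lemma fire_full : fire (.full : Cell k b) = some (num 2 0) := by
  rw [num_zero, fire]

lemma natCast_succ_sub_eq_zero_iff {v j : ℕ} (hv : v < k) (hj : j ≤ k) :
    (v + 1 - j : ZMod (k + 1)) = 0 ↔ j = v + 1 := by
  rw [sub_eq_zero, ← Nat.cast_succ, natCast_inj_of_le hv hj, eq_comm]

lemma natCast_succ_sub_eq_one_iff {v j : ℕ} (hv : v < k) (hj : j ≤ k) :
    (v + 1 - j : ZMod (k + 1)) = 1 ↔ j = v := by
  rw [sub_eq_iff_eq_add', add_left_inj, natCast_inj_of_le hv.le hj, eq_comm]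

lemma fire_cell {v j : ℕ} {d : ℕ → ℕ} (hv : v < k) (hj : j ≤ k)
    (hfull : j = v → j ≠ 0 → b ≤ d j) (hlt : j ≠ v → j ≠ 0 → d j < b) :
    fire (cell (v + 1) d j : Cell k b) = some (cell (v + 2) (carryDigit v d) j) := by
  have h0 := natCast_succ_sub_eq_zero_iff hv hj
  have h1 := natCast_succ_sub_eq_one_iff hv hj
  have hnext : (v + 2 - j : ZMod (k + 1)) = v + 1 - j + 1 := by ring
  rcases eq_or_ne j 0 with rfl | hj0
  · have hne : (v + 1 : ZMod (k + 1)) ≠ 0 := by simpa using h0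
    rw [cell_zero, cell_zero, fire, if_neg hne, add_assoc, one_add_one_eq_two]
  rw [cell_of_ne_zero hj0, cell_of_ne_zero hj0, hnext]
  rcases eq_or_ne j v with rfl | hjv
  · rw [num_of_le (hfull rfl hj0), fire_full, carryDigit_self, h1.2 rfl, one_add_one_eq_two]
  rcases eq_or_ne j (v + 1) with rfl | hjv'
  · rw [h0.2 rfl, fire_num_zero (by omega) (hlt hjv hj0), carryDigit_succ, zero_add]
  · rw [fire_num (hlt hjv hj0) (h0.not.2 hjv') (h1.not.2 hjv), carryDigit_of_ne d hjv hjv']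

lemma reset_eq_cell {q : Cell k b} {j : ℕ} (hj : j ≤ k) (h : loc q = 1 - j) :
    reset q = cell 1 (fun _ => 0) j := by
  have h1 : (1 - j : ZMod (k + 1)) = 1 ↔ j = 0 := by
    rw [sub_eq_self, natCast_eq_zero_iff_of_le hj]
  simp only [reset, cell, h, h1, num_zero]

end Moves

/-- The partial function `f` is defined on `A` and maps it into `B`. -/
def MapsInto {α β : Type*} (f : α → Option β) (A : Set α) (B : Set β) : Prop :=
  ∀ q ∈ A, ∃ q' ∈ B, f q = some q'

/-- The invariant of the lower bound: the set `R` contains the marker and a state for every digit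
of a counter of value at most `t`, in which only a digit at position `1` may have overflowed. -/
def Covers (R : Set (Cell k b)) (t : ℕ) : Prop :=
  ∃ (p : ZMod (k + 1)) (d : ℕ → ℕ), (∀ j ≤ k, cell p d j ∈ R) ∧
    (∀ j ≤ k, j ≠ 0 → b ≤ d j → p - (j : ZMod (k + 1)) = 1) ∧ value k b d ≤ t

lemma value_mono {d d' : ℕ → ℕ} (h : d ≤ d') : value k b d ≤ value k b d' :=
  Finset.sum_le_sum fun j _ => Nat.mul_le_mul_right _ (h (j + 1))

lemma value_zero : value k b (fun _ => 0) = 0 := by simp [value]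

section LowerBound

variable [NeZero b] {R S : Set (Cell k b)} {t : ℕ}

lemma covers_univ : Covers (Set.univ : Set (Cell k b)) 0 :=
  ⟨0, fun _ => 0, fun _ _ => trivial, fun _ _ _ h => absurd h (NeZero.pos b).not_ge,
    value_zero.le⟩

lemma Covers.stay (h : Covers R t) (hRS : MapsInto Move.stay.apply R S) :
    Covers S (t + 1) := by
  obtain ⟨p, d, hR, hfull, hval⟩ := h
  refine ⟨p, d, fun j hj => ?_, hfull, hval.trans t.le_succ⟩
  obtain ⟨q, hq, hq'⟩ := hRS _ (hR j hj)
  exact Option.some_inj.1 hq' ▸ hq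

lemma Covers.rotate (h : Covers R t) (hRS : MapsInto Move.rotate.apply R S) :
    Covers S (t + 1) := by
  obtain ⟨p, d, hR, hfull, hval⟩ := h
  refine ⟨p + 1, fun j => if d j < b then d j else 0, fun j hj => ?_, fun j _ _ hj => ?_,
    (value_mono fun j => ?_).trans (hval.trans t.le_succ)⟩
  · obtain ⟨q, hq, hq'⟩ := hRS _ (hR j hj)
    rw [← rot_cell (hfull j hj)]
    exact Option.some_inj.1 hq' ▸ hq
  · dsimp only at hj
    have := NeZero.pos b
    split_ifs at hj <;> omega
  · dsimp only
    split_ifs <;> omega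

lemma Covers.carry (h : Covers R t) (hk : 0 < k) (ht : t < b ^ k)
    (hRS : MapsInto Move.carry.apply R S) : Covers S (t + 1) := by
  obtain ⟨p, d, hR, hfull, hval⟩ := h
  have overflowed {j : ℕ} (hj : j ≤ k) (hj0 : j ≠ 0) (hpj : p - (j : ZMod (k + 1)) = 1) :
      b ≤ d j := by
    by_contra! hlt
    obtain ⟨q, -, hq⟩ := hRS _ (hR j hj)
    rw [cell_of_ne_zero hj0, hpj, Move.apply, fire_num_one hlt] at hq
    cases hq
  obtain ⟨u, hu, rfl⟩ := exists_natCast_eq p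
  rcases u with _ | v
  -- A marker at position `0` has digit `k` at position `1`, so the value would be at least `b ^ k`.
  · have : ((0 : ℕ) - k : ZMod (k + 1)) = 1 := by
      rw [Nat.cast_zero, zero_sub, neg_eq_iff_add_eq_zero, natCast_add_one_eq_zero]
    have := pow_le_value hk (overflowed le_rfl hk.ne' this)
    omega
  have at_one {j : ℕ} (hj : j ≤ k) : ((v + 1 : ℕ) - j : ZMod (k + 1)) = 1 ↔ j = v := by
    rw [Nat.cast_succ, natCast_succ_sub_eq_one_iff hu hj]
  have hlt {j : ℕ} (hj : j ≤ k) (hjv : j ≠ v) (hj0 : j ≠ 0) : d j < b := by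
    by_contra! hle
    exact hjv ((at_one hj).1 (hfull j hj hj0 hle))
  refine ⟨v + 2, carryDigit v d, fun j hj => ?_, fun j hj hj0 hle => ?_, ?_⟩
  · obtain ⟨q, hq, hq'⟩ := hRS _ (hR j hj)
    rw [Nat.cast_succ, Move.apply, fire_cell hu hj
      (fun hjv hj0 => overflowed hj hj0 ((at_one hj).2 hjv)) (hlt hj)] at hq'
    exact Option.some_inj.1 hq' ▸ hq
  · obtain rfl : j = v + 1 := by
      by_contra hjv
      exact hle.not_gt (carryDigit_lt (fun h => hlt hj h hj0) (NeZero.pos b) hjv)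
    push_cast
    ring
  · exact (value_carryDigit_le hu fun hv =>
      overflowed (Nat.le_of_lt hu) hv ((at_one (Nat.le_of_lt hu)).2 rfl)).trans
      (Nat.succ_le_succ hval)

lemma Covers.reset (h : Covers R t) (hRS : MapsInto Move.reset.apply R S) :
    Covers S (t + 1) := by
  obtain ⟨p, d, hR, hfull, -⟩ := h
  refine ⟨1, fun _ => 0, fun j hj => ?_, fun _ _ _ h => absurd h (NeZero.pos b).not_ge,
    value_zero.le.trans t.succ.zero_le⟩
  obtain ⟨i, hi, hpi⟩ := exists_natCast_eq (p - 1 + (j : ZMod (k + 1)))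
  obtain ⟨q, hq, hq'⟩ := hRS _ (hR i hi)
  rw [← reset_eq_cell hj (q := cell p d i) (by rw [loc_cell (hfull i hi), hpi]; ring)]
  exact Option.some_inj.1 hq' ▸ hq

lemma Covers.move (h : Covers R t) (hk : 0 < k) (ht : t < b ^ k) {m : Move}
    (hRS : MapsInto m.apply R S) : Covers S (t + 1) := by
  cases m
  exacts [h.stay hRS, h.rotate hRS, h.carry hk ht hRS, h.reset hRS]

end LowerBound

section Simulation

variable {Q Λ : Type*}

/-- Some word acts on the states `enc q` of the PFA `δ` as the partial function `f`. -/
def Realizes (δ : Q → Λ → Option Q) (enc : Cell k b → Q) (f : Cell k b → Option (Cell k b)) :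
    Prop :=
  ∃ w, ∀ q, pfaRun δ (enc q) w = (f q).map enc

/-- Some word maps every state `enc q` with `q ∈ A` to a state `enc q'` with `q' ∈ B`. -/
def Reach (δ : Q → Λ → Option Q) (enc : Cell k b → Q) (A B : Set (Cell k b)) : Prop :=
  ∃ w, ∀ q ∈ A, ∃ q' ∈ B, pfaRun δ (enc q) w = some (enc q')

variable {δ : Q → Λ → Option Q} {enc : Cell k b → Q} {A B C : Set (Cell k b)}

lemma reach_of_subset (h : A ⊆ B) : Reach δ enc A B :=
  ⟨[], fun q hq => ⟨q, h hq, rfl⟩⟩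

lemma Reach.trans (hAB : Reach δ enc A B) (hBC : Reach δ enc B C) : Reach δ enc A C := by
  obtain ⟨v, hv⟩ := hAB
  obtain ⟨w, hw⟩ := hBC
  refine ⟨v ++ w, fun q hq => ?_⟩
  obtain ⟨q', hq', hv⟩ := hv q hq
  obtain ⟨q'', hq'', hw⟩ := hw q' hq'
  exact ⟨q'', hq'', by rw [pfaRun_append, hv, Option.bind_some, hw]⟩

lemma Realizes.reach {f : Cell k b → Option (Cell k b)} (h : Realizes δ enc f)
    (hAB : MapsInto f A B) : Reach δ enc A B := by
  obtain ⟨w, hw⟩ := h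
  refine ⟨w, fun q hq => ?_⟩
  obtain ⟨q', hq', hf⟩ := hAB q hq
  exact ⟨q', hq', by rw [hw, hf, Option.map_some]⟩

/-- The states of the marker at position `p` and of the digits `d (l + 1), …, d k`. -/
def conf (l : ℕ) (p : ZMod (k + 1)) (d : ℕ → ℕ) : Set (Cell k b) :=
  cell p d '' {j | j ≤ k ∧ (j = 0 ∨ l < j)}

/-- From every counter without overflowed digits, the digit `x = d u` can be raised to `f x` without
changing the higher digits. Only the digits above `l` are present, and the marker ends up behind
digit `u`, in the position that enables a carry from it. -/
def CanRaise (δ : Q → Λ → Option Q) (enc : Cell k b → Q) (l u : ℕ) (f : ℕ → ℕ) : Prop :=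
  ∀ (p : ZMod (k + 1)) (d : ℕ → ℕ), (∀ j, d j < b) → ∃ d' : ℕ → ℕ, d' u = f (d u) ∧
    (∀ j > u, d' j = d j) ∧ (∀ j ≠ u, d' j < b) ∧
    Reach δ enc (conf l p d) (conf l ((u + 1 : ℕ) : ZMod (k + 1)) d')

lemma CanRaise.fill {l u : ℕ} (h : CanRaise δ enc l u (· + 1)) :
    CanRaise δ enc l u fun _ => b := by
  intro p d hd
  obtain ⟨n, hn⟩ := Nat.exists_eq_add_of_lt (hd u)
  induction n generalizing p d with
  | zero => simpa [hn] using h p d hd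
  | succ n ih =>
    obtain ⟨d', (hu : d' u = d u + 1), hhigh, hlt, hreach⟩ := h p d hd
    have hd' (j) : d' j < b := by
      rcases eq_or_ne j u with rfl | hj
      · omega
      · exact hlt j hj
    obtain ⟨d'', hu', hhigh', hlt', hreach'⟩ := ih _ d' hd' (by omega)
    exact ⟨d'', hu', fun j hj => (hhigh' j hj).trans (hhigh j hj), hlt', hreach.trans hreach'⟩

variable [NeZero b]

/-- The PFA `δ` simulates the ring counter: in each of two phases its states encode those of the
counter, and each letter performs a move and determines the next phase. In phase `false` it can
perform a rotation, a carry, and a reset followed by a carry, and it can reach this phase from all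
states at once. -/
structure Simulates (δ : Q → Λ → Option Q) (enc : Bool → Cell k b → Q) : Prop where
  step : ∀ φ l, ∃ φ' m, ∀ q, δ (enc φ q) l = (Move.apply m q).map (enc φ')
  eq_marker : ∀ {φ q i}, enc φ q = enc φ (.marker i) → q = .marker i
  rotate : Realizes δ (enc false) (some ∘ rot)
  carry : Realizes δ (enc false) fire
  restart : Realizes δ (enc false) (fire ∘ reset)
  collect : ∃ w, ∀ q, ∃ c, pfaRun δ q w = some (enc false c)

variable {enc : Bool → Cell k b → Q}

lemma Simulates.covers (h : Simulates δ enc) (hk : 0 < k) {w : List Λ}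
    (hw : ∀ q, pfaRun δ q w ≠ none) (hlen : w.length ≤ b ^ k) :
    ∃ φ, Covers {q | ∃ x, pfaRun δ x w = some (enc φ q)} w.length := by
  induction w using List.reverseRecOn with
  | nil =>
    exact ⟨false, by simpa [pfaRun] using covers_univ⟩
  | append_singleton w l ih =>
    rw [List.length_append, List.length_singleton] at hlen ⊢
    simp only [pfaRun_concat] at hw ⊢
    obtain ⟨φ, hφ⟩ := ih (fun x hx => hw x (by rw [hx, Option.bind_none])) (by omega)
    obtain ⟨φ', m, hm⟩ := h.step φ l
    refine ⟨φ', hφ.move hk (by omega) (m := m) ?_⟩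
    rintro q ⟨x, hx⟩
    have hrun : (pfaRun δ x w).bind (δ · l) = (m.apply q).map (enc φ') := by
      rw [hx, Option.bind_some, hm]
    obtain ⟨q', hq'⟩ : ∃ q', m.apply q = some q' := by
      rw [← Option.ne_none_iff_exists']
      intro hq
      exact hw x (by rw [hrun, hq, Option.map_none])
    exact ⟨q', ⟨x, by rw [hrun, hq', Option.map_some]⟩, hq'⟩

theorem Simulates.pow_le_length (h : Simulates δ enc) (hk : 0 < k) {w : List Λ}
    (hw : IsCareSyncWord δ w) : b ^ k ≤ w.length := by
  by_contra! hlt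
  obtain ⟨s, hs⟩ := hw
  obtain ⟨φ, p, d, hmem, -⟩ := h.covers hk (fun q => by simp [hs q]) hlt.le
  have enc_eq {q : Cell k b} (hq : ∃ x, pfaRun δ x w = some (enc φ q)) : enc φ q = s := by
    obtain ⟨x, hx⟩ := hq
    exact Option.some_inj.1 (hx.symm.trans (hs x))
  have : enc φ (cell p d 1) = enc φ (cell p d 0) :=
    (enc_eq (hmem 1 hk)).trans (enc_eq (hmem 0 k.zero_le)).symm
  rw [cell_of_ne_zero one_ne_zero, cell_zero] at this
  exact num_ne_marker (h.eq_marker this)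

lemma loc_iterate_rot (n : ℕ) (q : Cell k b) : loc (rot^[n] q) = loc q + n := by
  induction n with
  | zero => simp
  | succ n ih => rw [Function.iterate_succ_apply', loc_rot, ih, Nat.cast_succ, add_assoc]

lemma iterate_rot_cell {d : ℕ → ℕ} (hd : ∀ j, d j < b) (p : ZMod (k + 1)) (n j : ℕ) :
    rot^[n] (cell p d j : Cell k b) = cell (p + (n : ZMod (k + 1))) d j := by
  induction n with
  | zero => simp
  | succ n ih =>
    rw [Function.iterate_succ_apply', ih, rot_cell fun _ h => absurd h (hd j).not_ge]
    simp only [hd, if_true, Nat.cast_succ, add_assoc]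

lemma fire_cell_zero {d : ℕ → ℕ} {j : ℕ} (hk : 0 < k) (hfull : b ≤ d k) (hd : ∀ i ≠ k, d i < b)
    (hj : j ≤ k) : ∃ q' : Cell k b, fire (cell 0 d j) = some q' ∧
      loc q' = 1 - ((if j = 0 then k else j : ℕ) : ZMod (k + 1)) := by
  have hk1 : (1 - k : ZMod (k + 1)) = 2 := by
    linear_combination -natCast_add_one_eq_zero (k := k)
  rcases eq_or_ne j 0 with rfl | hj0
  · exact ⟨.digit 2 0, by simp [cell_zero, fire], by simp [hk1, loc]⟩
  rw [cell_of_ne_zero hj0, if_neg hj0, zero_sub]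
  rcases eq_or_ne j k with rfl | hjk
  · exact ⟨.digit 2 0, by rw [num_of_le hfull, fire], hk1.symm⟩
  have h0 : -(j : ZMod (k + 1)) ≠ 0 := by rwa [neg_ne_zero, Ne, natCast_eq_zero_iff_of_le hj]
  have h1 : -(j : ZMod (k + 1)) ≠ 1 := fun h => hjk <| (natCast_inj_of_le hj le_rfl).1 <| by
    linear_combination -h - natCast_add_one_eq_zero (k := k)
  refine ⟨_, fire_num (hd j hjk) h0 h1, ?_⟩
  rw [loc_num fun h => absurd h (hd j hjk).not_ge]
  ring

/-- The states at the positions occupied by `conf l 1 d`. -/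
def arc (l : ℕ) : Set (Cell k b) :=
  {q | ∃ j ≤ k, (j = 0 ∨ l < j) ∧ loc q = 1 - j}

lemma Simulates.reach_iterate_rot (h : Simulates δ enc) (A : Set (Cell k b)) (n : ℕ) :
    Reach δ (enc false) A (rot^[n] '' A) := by
  induction n with
  | zero => exact reach_of_subset (by simp)
  | succ n ih =>
    refine ih.trans (h.rotate.reach fun q hq => ⟨rot q, ?_, rfl⟩)
    rw [Function.iterate_succ', Set.image_comp]
    exact Set.mem_image_of_mem _ hq

variable {l : ℕ}

lemma Simulates.reach_conf (h : Simulates δ enc) {d : ℕ → ℕ} (hd : ∀ j, d j < b)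
    (p p' : ZMod (k + 1)) : Reach δ (enc false) (conf l p d) (conf l p' d) := by
  obtain ⟨n, -, hn⟩ := exists_natCast_eq (p' - p)
  refine (h.reach_iterate_rot _ n).trans (reach_of_subset ?_)
  rintro _ ⟨_, ⟨j, hj, rfl⟩, rfl⟩
  exact ⟨j, hj, by rw [iterate_rot_cell hd, hn, add_sub_cancel]⟩

lemma Simulates.reach_carryDigit (h : Simulates δ enc) {v : ℕ} {d : ℕ → ℕ} (hv : v < k)
    (hfull : l < v → b ≤ d v) (hd : ∀ j ≠ v, d j < b) :
    Reach δ (enc false) (conf l ((v + 1 : ℕ) : ZMod (k + 1)) d)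
      (conf l ((v + 1 + 1 : ℕ) : ZMod (k + 1)) (carryDigit v d)) := by
  refine h.carry.reach ?_
  rintro _ ⟨j, ⟨hj, hlj⟩, rfl⟩
  refine ⟨_, ⟨j, ⟨hj, hlj⟩, rfl⟩, ?_⟩
  rw [Nat.cast_succ, fire_cell hv hj _ fun hjv _ => hd j hjv]
  · push_cast
    rw [add_assoc, one_add_one_eq_two]
  · rintro rfl hj0
    exact hfull (hlj.resolve_left hj0)

lemma Simulates.canRaise_lowest (h : Simulates δ enc) (hl : l < k) :
    CanRaise δ (enc false) l (l + 1) (· + 1) := fun p d hd =>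
  ⟨carryDigit l d, carryDigit_succ l d,
    fun j hj => carryDigit_of_ne d (by omega) (by omega),
    fun j hj => carryDigit_lt (fun _ => hd j) (NeZero.pos b) hj,
    (h.reach_conf hd p _).trans
      (h.reach_carryDigit hl (fun h => absurd h l.lt_irrefl) fun j _ => hd j)⟩

lemma Simulates.canRaise_next (h : Simulates δ enc) {u : ℕ} (huk : u < k)
    (hfill : CanRaise δ (enc false) l u fun _ => b) :
    CanRaise δ (enc false) l (u + 1) (· + 1) := by
  intro p d hd
  obtain ⟨d', hu, hhigh, hlt, hreach⟩ := hfill p d hd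
  refine ⟨carryDigit u d', ?_, fun j hj => ?_, fun j hj => ?_,
    hreach.trans (h.reach_carryDigit huk (fun _ => hu.ge) hlt)⟩
  · rw [carryDigit_succ, hhigh _ u.lt_succ_self]
  · rw [carryDigit_of_ne d' (by omega) (by omega), hhigh j (by omega)]
  · exact carryDigit_lt (hlt j) (NeZero.pos b) hj

lemma Simulates.canRaise_fill (h : Simulates δ enc) {u : ℕ} (hlu : l < u) (huk : u ≤ k) :
    CanRaise δ (enc false) l u fun _ => b := by
  induction u, hlu using Nat.le_induction with
  | base => exact (h.canRaise_lowest huk).fill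
  | succ u _ ih => exact (h.canRaise_next huk (ih (by omega))).fill

lemma Simulates.reach_restart (h : Simulates δ enc) (hk : 0 < k) (hb : 1 < b) (l : ℕ) :
    ∃ d : ℕ → ℕ, (∀ j, d j < b) ∧ Reach δ (enc false) (arc l) (conf l 2 d) := by
  refine ⟨carryDigit 0 fun _ => 0, fun j => ?_, h.restart.reach ?_⟩
  · rcases eq_or_ne j 1 with rfl | hj
    · rwa [carryDigit_succ]
    · exact carryDigit_lt (fun _ => NeZero.pos b) (NeZero.pos b) hj
  · rintro q ⟨j, hj, hlj, hq⟩
    refine ⟨_, ⟨j, ⟨hj, hlj⟩, rfl⟩, ?_⟩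
    have := fire_cell (d := fun _ => 0) hk hj (fun h h0 => absurd h h0) fun _ _ => NeZero.pos b
    simpa only [Function.comp_apply, reset_eq_cell hj hq, Nat.cast_zero, zero_add] using this

lemma Simulates.reach_arc_succ (h : Simulates δ enc) (hb : 1 < b) (hl : l < k) :
    Reach δ (enc false) (arc l) (arc (l + 1)) := by
  obtain ⟨d, hd, hstart⟩ := h.reach_restart (by omega) hb l
  obtain ⟨d', hfull, -, hlt, hfill⟩ := h.canRaise_fill hl le_rfl 2 d hd
  -- At position `0` the carry merges the marker with the overflowed digit `k`.
  have merged : Reach δ (enc false) (conf l ((k + 1 : ℕ) : ZMod (k + 1)) d')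
      {q | ∃ j ≤ k, l < j ∧ loc q = 1 - j} := by
    refine h.carry.reach ?_
    rintro _ ⟨j, ⟨hj, hlj⟩, rfl⟩
    obtain ⟨q', hfire, hloc⟩ := fire_cell_zero (by omega) hfull.ge hlt hj
    rw [ZMod.natCast_self]
    exact ⟨q', ⟨_, by split_ifs <;> omega, by split_ifs <;> omega, hloc⟩, hfire⟩
  refine hstart.trans <| hfill.trans <| merged.trans <|
    (h.reach_iterate_rot _ k).trans (reach_of_subset ?_)
  rintro _ ⟨q, ⟨j, hj, hlj, hq⟩, rfl⟩
  rcases hj.eq_or_lt with rfl | hjk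
  · exact ⟨0, Nat.zero_le _, Or.inl rfl, by rw [loc_iterate_rot, hq]; simp⟩
  · refine ⟨j + 1, hjk, Or.inr (by omega), ?_⟩
    rw [loc_iterate_rot, hq, Nat.cast_succ]
    linear_combination natCast_add_one_eq_zero (k := k)

lemma Simulates.reach_arc (h : Simulates δ enc) (hb : 1 < b) (hl : l ≤ k) :
    Reach δ (enc false) Set.univ (arc l) := by
  induction l with
  | zero =>
    refine reach_of_subset fun q _ => ?_
    obtain ⟨j, hj, hq⟩ := exists_natCast_eq (1 - loc q)
    exact ⟨j, hj, j.eq_zero_or_pos, by rw [hq, sub_sub_cancel]⟩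
  | succ l ih => exact (ih (by omega)).trans (h.reach_arc_succ hb hl)

theorem Simulates.exists_isCareSyncWord (h : Simulates δ enc) (hk : 0 < k) (hb : 1 < b) :
    ∃ w, IsCareSyncWord δ w := by
  obtain ⟨d, -, hstart⟩ := h.reach_restart hk hb k
  obtain ⟨w, hw⟩ := (h.reach_arc hb le_rfl).trans hstart
  obtain ⟨v, hv⟩ := h.collect
  refine ⟨v ++ w, enc false (.marker 2), fun q => ?_⟩
  obtain ⟨c, hc⟩ := hv q
  obtain ⟨_, ⟨j, ⟨hj, hkj⟩, rfl⟩, hrun⟩ := hw c trivial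
  obtain rfl : j = 0 := hkj.resolve_right hj.not_gt
  rw [pfaRun_append, hc, Option.bind_some, hrun, cell_zero]

end Simulation

section Cardinality

/-- Enumeration of the states of the ring counter. -/
def decode : Option (ZMod (k + 1) × Option (Fin b)) → Cell k b
  | none => .full
  | some (i, none) => .marker i
  | some (i, some d) => .digit i d

lemma decode_surjective : (decode : _ → Cell k b).Surjective
  | .marker i => ⟨some (i, none), rfl⟩
  | .digit i d => ⟨some (i, some d), rfl⟩
  | .full => ⟨none, rfl⟩

instance : Finite (Cell k b) := Finite.of_surjective decode decode_surjective

lemma ncard_le_of_loc_mem {S : Set (Cell k b)} {P : Finset (ZMod (k + 1))}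
    (h : ∀ q ∈ S, loc q ∈ P) : S.ncard ≤ P.card * (b + 1) + 1 := by
  classical
  have hsub : S ⊆ ((Finset.insertNone (P ×ˢ Finset.univ)).image decode : Finset (Cell k b)) := by
    intro q hq
    obtain ⟨_ | ⟨i, _ | d⟩, rfl⟩ := decode_surjective q
    · simpa using ⟨none, by simp, rfl⟩
    · simpa using ⟨some (i, none), by simpa using show i ∈ P from h _ hq, rfl⟩
    · simpa using ⟨some (i, some d), by simpa using show i ∈ P from h _ hq, rfl⟩
  calc S.ncard ≤ ((Finset.insertNone (P ×ˢ Finset.univ)).image decode : Finset (Cell k b)).card :=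
        Set.ncard_coe_finset (_ : Finset (Cell k b)) ▸
          Set.ncard_le_ncard hsub (Finset.finite_toSet _)
    _ ≤ (Finset.insertNone (P ×ˢ (Finset.univ : Finset (Option (Fin b))))).card :=
        Finset.card_image_le
    _ = P.card * (b + 1) + 1 := by simp

end Cardinality

section Machine

variable [NeZero b] {m : ℕ}

/-- The map identifying all states in which a carry is blocked. -/
def merge : Cell k b → Cell k b
  | .digit i d => .digit i (if i = 1 then 0 else d)
  | q => q

lemma loc_merge (q : Cell k b) : loc (merge q) = loc q := by
  cases q <;> rfl

lemma merge_merge (q : Cell k b) : merge (merge q) = merge q := by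
  cases q <;> simp +contextual [merge]

lemma fire_merge (q : Cell k b) : fire (merge q) = fire q := by
  cases q <;> simp only [merge, fire]
  split_ifs <;> rfl

lemma reset_merge (q : Cell k b) : reset (merge q) = reset q := by
  simp only [reset, loc_merge]

lemma merge_eq_marker_iff {q : Cell k b} {i : ZMod (k + 1)} :
    merge q = .marker i ↔ q = .marker i := by
  cases q <;> simp [merge]

lemma fire_eq_none_iff {q : Cell k b} : fire q = none ↔ ∃ d, q = .digit 1 d := by
  cases q <;> simp [fire]

lemma fire_eq_rot {q : Cell k b} (h0 : loc q ≠ 0) (h1 : loc q ≠ 1) : fire q = some (rot q) := by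
  cases q
  · exact congrArg some (if_neg h0)
  · exact (if_neg h1).trans (congrArg some (if_neg h0))
  · exact absurd rfl h1

lemma fire_reset_ne_none (q : Cell k b) : fire (reset q) ≠ none := by
  rw [Ne, fire_eq_none_iff, reset]
  split_ifs with h <;> simp [h]

/-- The states of the machine: a lower copy of the ring counter, for phase `false`, and an upper
copy, for phase `true`, consisting of the merged states at the positions in `P` only. At the other
positions the two phases share the lower copy. -/
abbrev State (k b : ℕ) [NeZero b] (P : Finset (ZMod (k + 1))) : Type :=
  Cell k b ⊕ {q : Cell k b // loc q ∈ P ∧ merge q = q}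

/-- The state of the machine that encodes the state `q` of the ring counter in phase `φ`. -/
def encode (P : Finset (ZMod (k + 1))) (φ : Bool) (q : Cell k b) : State k b P :=
  if h : φ ∧ loc q ∈ P then .inr ⟨merge q, (loc_merge q).symm ▸ h.2, merge_merge q⟩ else .inl q

/-- The next phase and the move performed by a letter in a given phase: letter `0` rotates the
lower copy and carries in the upper copy, letter `l + 1` resets the ring in phase `φ` if `rst φ l`
and switches to phase `true` otherwise. -/
def program (rst : Bool → Fin m → Bool) (φ : Bool) : Fin (m + 1) → Bool × Move :=
  Fin.cases (false, if φ then .carry else .rotate)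
    fun l => if rst φ l then (false, .reset) else (true, .stay)

/-- The PFA that executes `program rst`. -/
def machine (rst : Bool → Fin m → Bool) (P : Finset (ZMod (k + 1))) (x : State k b P)
    (l : Fin (m + 1)) : Option (State k b P) :=
  ((program rst x.isRight l).2.apply (x.elim id Subtype.val)).map
    (encode P (program rst x.isRight l).1)

/-- At the positions outside `P`, all letters act in the same way in both phases: the carry acts as
the rotation away from the positions `0` and `1`. -/
structure Compatible (rst : Bool → Fin m → Bool) (P : Finset (ZMod (k + 1))) : Prop where
  zero_mem : 0 ∈ P
  one_mem : 1 ∈ P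
  rst_eq_of_notMem : ∀ i ∉ P, rst true = rst false

variable {rst : Bool → Fin m → Bool} {P : Finset (ZMod (k + 1))}

lemma encode_true_of_mem {q : Cell k b} (hq : loc q ∈ P) :
    encode P true q = .inr ⟨merge q, (loc_merge q).symm ▸ hq, merge_merge q⟩ :=
  dif_pos ⟨rfl, hq⟩

lemma encode_true_of_notMem {q : Cell k b} (hq : loc q ∉ P) : encode P true q = .inl q :=
  dif_neg fun h => hq h.2

lemma encode_merge {q : Cell k b} (hq : loc q ∈ P) :
    encode P true (merge q) = encode P true q := by
  simp only [encode, loc_merge, merge_merge, hq, and_self, dite_true]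

lemma encode_surjective (x : State k b P) : ∃ φ q, x = encode P φ q := by
  rcases x with q | ⟨q, hq, hmerge⟩
  · exact ⟨false, q, rfl⟩
  · exact ⟨true, q, by simp only [encode_true_of_mem hq, hmerge]⟩

lemma encode_eq_marker {φ : Bool} {q : Cell k b} {i : ZMod (k + 1)}
    (h : encode P φ q = encode P φ (.marker i)) : q = .marker i := by
  unfold encode at h
  split_ifs at h
  · exact merge_eq_marker_iff.1 (congrArg Subtype.val (Sum.inr_injective h))
  · exact Sum.inl_injective h

lemma Compatible.machine_encode (hP : Compatible rst P) (φ : Bool) (q : Cell k b)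
    (l : Fin (m + 1)) : machine rst P (encode P φ q) l =
      ((program rst φ l).2.apply q).map (encode P (program rst φ l).1) := by
  rcases φ with _ | _
  · rfl
  by_cases hq : loc q ∈ P
  · rw [encode_true_of_mem hq]
    cases l using Fin.cases with
    | zero => simp [machine, program, Move.apply, fire_merge]
    | succ l =>
      cases h : rst true l <;>
        simp [machine, program, Move.apply, h, encode_merge hq, reset_merge]
  · rw [encode_true_of_notMem hq]
    cases l using Fin.cases with
    | zero =>
      have hrot := fire_eq_rot (fun h => hq (h ▸ hP.zero_mem)) (fun h => hq (h ▸ hP.one_mem))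
      simp [machine, program, Move.apply, hrot]
    | succ l =>
      have : program rst true l.succ = program rst false l.succ := by
        simp only [program, Fin.cases_succ, hP.rst_eq_of_notMem _ hq]
      rw [machine, Sum.isRight_inl, Sum.elim_inl, id, this]

lemma machine_rotate (q : Cell k b) :
    machine rst P (encode P false q) 0 = some (encode P false (rot q)) := rfl

lemma Compatible.machine_carry (hP : Compatible rst P) (q : Cell k b) :
    machine rst P (encode P true q) 0 = (fire q).map (encode P false) :=
  hP.machine_encode true q 0

lemma Compatible.machine_stay (hP : Compatible rst P) {φ : Bool} {l : Fin m} (q : Cell k b)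
    (hl : rst φ l = false) : machine rst P (encode P φ q) l.succ = some (encode P true q) := by
  simp [hP.machine_encode, program, hl, Move.apply]

lemma Compatible.machine_reset (hP : Compatible rst P) {φ : Bool} {l : Fin m} (q : Cell k b)
    (hl : rst φ l = true) :
    machine rst P (encode P φ q) l.succ = some (encode P false (reset q)) := by
  simp [hP.machine_encode, program, hl, Move.apply]

lemma Compatible.machine_succ_ne_none (hP : Compatible rst P) (φ : Bool) (q : Cell k b)
    (l : Fin m) : machine rst P (encode P φ q) l.succ ≠ none := by
  cases h : rst φ l
  · simp [hP.machine_stay q h]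
  · simp [hP.machine_reset q h]

lemma Compatible.existsUnique_machine_eq_none (hP : Compatible rst P) :
    ∃! p : State k b P × Fin (m + 1), machine rst P p.1 p.2 = none := by
  refine ⟨(encode P true (.digit 1 0), 0), by simp [hP.machine_carry, fire], ?_⟩
  rintro ⟨x, l⟩ hx
  obtain ⟨φ, q, rfl⟩ := encode_surjective x
  cases l using Fin.cases with
  | zero =>
    rcases φ with _ | _
    · simp [machine_rotate] at hx
    obtain ⟨d, rfl⟩ := fire_eq_none_iff.1 (Option.map_eq_none_iff.1 (hP.machine_carry q ▸ hx))
    have hmerge : merge (.digit 1 d : Cell k b) = .digit 1 0 := by simp [merge]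
    rw [← encode_merge (q := .digit 1 d) hP.one_mem, hmerge]
  | succ l => exact absurd hx (hP.machine_succ_ne_none φ q l)

lemma Compatible.collect (hP : Compatible rst P) {r : Fin m} (hr : rst true r = true) (u : Fin m)
    (x : State k b P) :
    ∃ c, pfaRun (machine rst P) x [u.succ, r.succ, 0] = some (encode P false c) := by
  simp only [pfaRun_cons, pfaRun_nil]
  obtain ⟨φ, q, rfl⟩ := encode_surjective x
  by_cases hφ : rst φ u = false
  · exact ⟨rot (reset q), by simp [hP.machine_stay _ hφ, hP.machine_reset _ hr, machine_rotate]⟩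
  rw [Bool.not_eq_false] at hφ
  cases hr' : rst false r
  · obtain ⟨c, hc⟩ := Option.ne_none_iff_exists'.1 (fire_reset_ne_none q)
    exact ⟨c, by simp [hP.machine_reset _ hφ, hP.machine_stay _ hr', hP.machine_carry, hc]⟩
  · exact ⟨rot (reset (reset q)), by
      simp [hP.machine_reset _ hφ, hP.machine_reset _ hr', machine_rotate]⟩

lemma Compatible.simulates_machine (hP : Compatible rst P) {u r : Fin m}
    (hu : rst false u = false) (hr : rst true r = true) :
    Simulates (machine (b := b) rst P) (encode P) where
  step φ l := ⟨_, _, fun q => hP.machine_encode φ q l⟩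
  eq_marker := encode_eq_marker
  rotate := ⟨[0], fun _ => rfl⟩
  carry := ⟨[u.succ, 0], fun q => by
    simp [pfaRun_cons, pfaRun_nil, hP.machine_stay _ hu, hP.machine_carry]⟩
  restart := ⟨[u.succ, r.succ, u.succ, 0], fun q => by
    simp [pfaRun_cons, pfaRun_nil, hP.machine_stay _ hu, hP.machine_reset _ hr,
      hP.machine_carry]⟩
  collect := ⟨_, hP.collect hr u⟩

lemma card_state_le (P : Finset (ZMod (k + 1))) :
    Nat.card (State k b P) ≤ (k + 1 + P.card) * (b + 1) + 2 := by
  have lower : Nat.card (Cell k b) ≤ (k + 1) * (b + 1) + 1 := by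
    simpa [Set.ncard_univ] using
      ncard_le_of_loc_mem (S := (Set.univ : Set (Cell k b))) fun q _ => Finset.mem_univ (loc q)
  have upper := ncard_le_of_loc_mem (S := {q : Cell k b | loc q ∈ P ∧ merge q = q})
    fun _ hq => hq.1
  calc Nat.card (State k b P) = Nat.card (Cell k b) + _ := Nat.card_sum
    _ ≤ _ := Nat.add_le_add lower upper
    _ = (k + 1 + P.card) * (b + 1) + 2 := by ring

theorem Compatible.exists_isSlowPFA (hP : Compatible rst P) (hk : 0 < k) (hb : 1 < b)
    (hu : ∃ u, rst false u = false) (hr : ∃ r, rst true r = true) {n : ℕ}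
    (hn : (k + 1 + P.card) * (b + 1) + 2 ≤ n) :
    ∃ δ : Fin n → Fin (m + 1) → Option (Fin n), IsSlowPFA δ (b ^ k) := by
  obtain ⟨u, hu⟩ := hu
  obtain ⟨r, hr⟩ := hr
  have hsim : Simulates (machine (b := b) rst P) _ := hP.simulates_machine hu hr
  have hslow : IsSlowPFA (machine (b := b) rst P) (b ^ k) :=
    ⟨hP.existsUnique_machine_eq_none, hsim.exists_isCareSyncWord hk hb,
      fun w hw => by exact_mod_cast hsim.pow_le_length hk hw⟩
  have htotal (l) : machine rst P (encode P false (.full : Cell k b)) l ≠ none := by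
    cases l using Fin.cases with
    | zero => simp [machine_rotate]
    | succ l => exact hP.machine_succ_ne_none _ _ l
  exact hslow.exists_fin (by positivity) htotal ((card_state_le P).trans hn)

end Machine

end RingCounter

open RingCounter

theorem exists_single_undefined_pfa_exp_general {b : ℕ} (hb : 1 < b) :
    HasSyncGrowth 3 (fun n => (b : ℝ) ^ ((n : ℝ) / (b + 1 : ℕ))) ∧
      HasSyncGrowth 2 (fun n => (b : ℝ) ^ ((n : ℝ) / (2 * (b + 1) : ℕ))) := by
  have : NeZero b := ⟨by omega⟩
  refine ⟨.of_pow (c := 3 * (b + 1) + 2) (by omega) (by omega) fun k n hk hn => ?_,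
    .of_pow (c := 2 * (b + 1) + 2) (by omega) (by omega) fun k n hk hn => ?_⟩
  · have hP : Compatible (fun _ => ![false, true]) ({0, 1} : Finset (ZMod (k + 1))) :=
      ⟨by simp, by simp, fun _ _ => rfl⟩
    have hcard : ({0, 1} : Finset (ZMod (k + 1))).card ≤ 2 := Finset.card_le_two
    exact hP.exists_isSlowPFA hk hb ⟨0, rfl⟩ ⟨1, rfl⟩ (by nlinarith)
  · have hP : Compatible (fun φ (_ : Fin 1) => φ) (Finset.univ : Finset (ZMod (k + 1))) :=
      ⟨by simp, by simp, by simp⟩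
    refine hP.exists_isSlowPFA hk hb ⟨0, rfl⟩ ⟨0, rfl⟩ (le_trans (le_of_eq ?_) hn)
    rw [Finset.card_univ, ZMod.card]
    ring

/-- There are sequences of carefully synchronizing PFAs with exactly one undefined
transition and exponential shortest carefully synchronizing word length:
with three symbols and length `Ω(3^{n/7})`, and with two symbols and length
`Ω(2^{n/5})`. -/
theorem exists_single_undefined_pfa_exp :
    (∃ c : ℝ, 0 < c ∧ ∃ N : ℕ, ∀ n : ℕ, N ≤ n →
      ∃ δ : Fin n → Fin 3 → Option (Fin n),
        (∃! p : Fin n × Fin 3, δ p.1 p.2 = none) ∧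
        (∃ w : List (Fin 3), IsCareSyncWord δ w) ∧
        ∀ w : List (Fin 3), IsCareSyncWord δ w →
          c * (3 : ℝ) ^ ((n : ℝ) / 7) ≤ (w.length : ℝ)) ∧
    (∃ c' : ℝ, 0 < c' ∧ ∃ N' : ℕ, ∀ n : ℕ, N' ≤ n →
      ∃ δ : Fin n → Fin 2 → Option (Fin n),
        (∃! p : Fin n × Fin 2, δ p.1 p.2 = none) ∧
        (∃ w : List (Fin 2), IsCareSyncWord δ w) ∧
        ∀ w : List (Fin 2), IsCareSyncWord δ w →
          c' * (2 : ℝ) ^ ((n : ℝ) / 5) ≤ (w.length : ℝ)) := by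
  refine ⟨(exists_single_undefined_pfa_exp_general (b := 3) (by norm_num)).1.mono fun n => ?_,
    (exists_single_undefined_pfa_exp_general (b := 4) (by norm_num)).2.mono fun n => le_of_eq ?_⟩
  · exact_mod_cast Real.rpow_le_rpow_of_exponent_le (by norm_num : (1 : ℝ) ≤ 3)
      (by gcongr; norm_num : (n : ℝ) / 7 ≤ (n : ℝ) / 4)
  · calc (2 : ℝ) ^ ((n : ℝ) / 5) = (2 : ℝ) ^ (2 * ((n : ℝ) / 10)) := by ring_nf
      _ = ((2 : ℝ) ^ (2 : ℝ)) ^ ((n : ℝ) / 10) := Real.rpow_mul (by norm_num) _ _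
      _ = ((4 : ℕ) : ℝ) ^ ((n : ℝ) / (2 * (4 + 1) : ℕ)) := by norm_num
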